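/- arXiv:0911.4703 — 2 statements merged into one kernel-verified Lean document; each statement's English description precedes it below -/
import Mathlib

section
/- For every admissible pair (φ,ψ) with J(φ,ψ) = 1 and every s > 0, E(φ,ψ;s) ≥ −g·k + (σ k²/2) ψ(0)² + s·E1(φ,ψ); moreover E1(φ,ψ) ≥ 0, so in particular E(φ,ψ;s) ≥ −g·k. -/
open Set MeasureTheory intervalIntegral Filter Topology

noncomputable section

namespace RT

/-- The piecewise integral `∫_{-m}^0 + ∫_0^ℓ`. -/
def pwInt (m l : ℝ) (f : ℝ → ℝ) : ℝ :=
  (∫ x in (-m)..(0:ℝ), f x) + ∫ x in (0:ℝ)..l, f x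

/-- `f` restricted to `[-m,0)` extends continuously to `[-m,0]`, and `f` restricted to
`(0,ℓ]` extends continuously to `[0,ℓ]`. -/
def PiecewiseCont (m l : ℝ) (f : ℝ → ℝ) : Prop :=
  (∃ F : ℝ → ℝ, ContinuousOn F (Icc (-m) 0) ∧ EqOn f F (Ico (-m) 0)) ∧
  (∃ F : ℝ → ℝ, ContinuousOn F (Icc 0 l) ∧ EqOn f F (Ioc 0 l))

/-- A profile function: the restriction to `[-m,0)` extends continuously to `[-m,0]`, and
the function is continuous on `[0,ℓ]` (hence right-continuous at `0`). -/
def Profile (m l : ℝ) (f : ℝ → ℝ) : Prop :=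
  (∃ F : ℝ → ℝ, ContinuousOn F (Icc (-m) 0) ∧ EqOn f F (Ico (-m) 0)) ∧
  ContinuousOn f (Icc 0 l)

/-- The four steady-state profiles `ρ0, p, ε0, δ0` with their positivity assumptions. -/
def ProfilesHyp (m l : ℝ) (ρ0 p ε0 δ0 : ℝ → ℝ) : Prop :=
  Profile m l ρ0 ∧ Profile m l p ∧ Profile m l ε0 ∧ Profile m l δ0 ∧
  (∀ x ∈ Icc (-m) l, 0 < ρ0 x) ∧ (∀ x ∈ Icc (-m) l, 0 < p x) ∧
  (∀ x ∈ Icc (-m) l, 0 < ε0 x) ∧ (∀ x ∈ Icc (-m) l, 0 ≤ δ0 x)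

/-- `f` is continuous on `[-m,ℓ]` and continuously differentiable on `[-m,0]` and on
`[0,ℓ]`, with piecewise derivative `fd`. -/
def PiecewiseC1 (m l : ℝ) (f fd : ℝ → ℝ) : Prop :=
  ContinuousOn f (Icc (-m) l) ∧
  (∀ x ∈ Ico (-m) 0, HasDerivWithinAt f (fd x) (Icc (-m) 0) x) ∧
  (∀ x ∈ Ioc 0 l, HasDerivWithinAt f (fd x) (Icc 0 l) x) ∧
  PiecewiseCont m l fd

/-- An admissible pair `(φ,ψ)` with piecewise derivatives `(φd,ψd)`. -/
def Admissible (m l : ℝ) (φ ψ φd ψd : ℝ → ℝ) : Prop :=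
  PiecewiseC1 m l φ φd ∧ PiecewiseC1 m l ψ ψd ∧
  φ (-m) = 0 ∧ φ l = 0 ∧ ψ (-m) = 0 ∧ ψ l = 0

/-- The energy `E(φ,ψ;s)`. -/
def energyE (m l g σ k : ℝ) (ρ0 p ε0 δ0 : ℝ → ℝ) (φ ψ φd ψd : ℝ → ℝ) (s : ℝ) : ℝ :=
  σ * k ^ 2 / 2 * (ψ 0) ^ 2
  + (1 / 2) * pwInt m l (fun x =>
      (s * δ0 x + p x * ρ0 x) * (ψd x + k * φ x) ^ 2 - 2 * g * ρ0 x * k * φ x * ψ x)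
  + (s / 2) * pwInt m l (fun x =>
      ε0 x * ((φd x - k * ψ x) ^ 2 + (ψd x - k * φ x) ^ 2
        + (1 / 3) * (ψd x + k * φ x) ^ 2))

/-- The normalization functional `J(φ,ψ)`. -/
def energyJ (m l : ℝ) (ρ0 : ℝ → ℝ) (φ ψ : ℝ → ℝ) : ℝ :=
  (1 / 2) * pwInt m l (fun x => ρ0 x * ((φ x) ^ 2 + (ψ x) ^ 2))

/-- The viscous part `E1(φ,ψ)` of the energy. -/
def energyE1 (m l k : ℝ) (ε0 δ0 : ℝ → ℝ) (φ ψ φd ψd : ℝ → ℝ) : ℝ :=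
  (1 / 2) * pwInt m l (fun x => (δ0 x + ε0 x / 3) * (ψd x + k * φ x) ^ 2)
  + (1 / 2) * pwInt m l (fun x =>
      ε0 x * ((φd x - k * ψ x) ^ 2 + (ψd x - k * φ x) ^ 2))

/-- `μ(s)`: the infimum of `E(·,·;s)` over admissible pairs with `J = 1`. -/
def muInf (m l g σ k : ℝ) (ρ0 p ε0 δ0 : ℝ → ℝ) (s : ℝ) : ℝ :=
  sInf { e : ℝ | ∃ φ ψ φd ψd : ℝ → ℝ, Admissible m l φ ψ φd ψd ∧
    energyJ m l ρ0 φ ψ = 1 ∧ e = energyE m l g σ k ρ0 p ε0 δ0 φ ψ φd ψd s }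

/-- The hydrostatic steady-state relation `ρ0' = -g ρ0 / p` on each piece. -/
def Hydrostatic (m l g : ℝ) (ρ0 p : ℝ → ℝ) : Prop :=
  (∀ x ∈ Ico (-m) 0, HasDerivWithinAt ρ0 (-g * ρ0 x / p x) (Ico (-m) 0) x) ∧
  (∀ x ∈ Ioc 0 l, HasDerivWithinAt ρ0 (-g * ρ0 x / p x) (Ioc 0 l) x)

end RT

namespace RT

/-!
Completing the square in the gravity term, `-2φψ = (φ - ψ)² - (φ² + ψ²)`, gives the identity
`E = -g k J + (σ k² / 2) ψ(0)² + s E₁ + (1/2) ∫ ρ₀ (p (ψ' + k φ)² + g k (φ - ψ)²)`,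
whose last integral is nonnegative.
-/

section

variable {m l : ℝ}

attribute [fun_prop] PiecewiseCont

namespace PiecewiseCont

variable {f h : ℝ → ℝ}

@[fun_prop]
theorem const (c : ℝ) : PiecewiseCont m l fun _ => c :=
  ⟨⟨fun _ => c, continuousOn_const, fun _ _ => rfl⟩,
    ⟨fun _ => c, continuousOn_const, fun _ _ => rfl⟩⟩

theorem continuous_comp₂ {op : ℝ → ℝ → ℝ} (hop : Continuous fun q : ℝ × ℝ => op q.1 q.2)
    (hf : PiecewiseCont m l f) (hh : PiecewiseCont m l h) :
    PiecewiseCont m l fun x => op (f x) (h x) := by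
  obtain ⟨⟨f₁, hf₁, hff₁⟩, ⟨f₂, hf₂, hff₂⟩⟩ := hf
  obtain ⟨⟨h₁, hh₁, hhh₁⟩, ⟨h₂, hh₂, hhh₂⟩⟩ := hh
  exact ⟨⟨_, hop.comp_continuousOn (hf₁.prodMk hh₁), fun _ hx => congrArg₂ op (hff₁ hx) (hhh₁ hx)⟩,
    ⟨_, hop.comp_continuousOn (hf₂.prodMk hh₂), fun _ hx => congrArg₂ op (hff₂ hx) (hhh₂ hx)⟩⟩

@[fun_prop]
theorem add (hf : PiecewiseCont m l f) (hh : PiecewiseCont m l h) :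
    PiecewiseCont m l fun x => f x + h x :=
  continuous_comp₂ continuous_add hf hh

@[fun_prop]
theorem sub (hf : PiecewiseCont m l f) (hh : PiecewiseCont m l h) :
    PiecewiseCont m l fun x => f x - h x :=
  continuous_comp₂ continuous_sub hf hh

@[fun_prop]
theorem mul (hf : PiecewiseCont m l f) (hh : PiecewiseCont m l h) :
    PiecewiseCont m l fun x => f x * h x :=
  continuous_comp₂ continuous_mul hf hh

@[fun_prop]
theorem div_const (hf : PiecewiseCont m l f) (c : ℝ) : PiecewiseCont m l fun x => f x / c := by
  simpa only [div_eq_mul_inv] using hf.mul (const c⁻¹)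

@[fun_prop]
theorem pow (hf : PiecewiseCont m l f) (n : ℕ) : PiecewiseCont m l fun x => f x ^ n :=
  continuous_comp₂ (op := fun a _ => a ^ n) (by fun_prop) hf hf

theorem intervalIntegrable_left (hm : 0 ≤ m) (hf : PiecewiseCont m l f) :
    IntervalIntegrable f volume (-m) 0 := by
  obtain ⟨⟨F, hF, hfF⟩, -⟩ := hf
  have hm' : -m ≤ 0 := neg_nonpos.mpr hm
  have hFint := hF.intervalIntegrable_of_Icc (μ := volume) hm'
  rw [intervalIntegrable_iff_integrableOn_Ico_of_le hm'] at hFint ⊢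
  exact hFint.congr_fun hfF.symm measurableSet_Ico

theorem intervalIntegrable_right (hl : 0 ≤ l) (hf : PiecewiseCont m l f) :
    IntervalIntegrable f volume 0 l := by
  obtain ⟨-, ⟨F, hF, hfF⟩⟩ := hf
  have hFint := hF.intervalIntegrable_of_Icc (μ := volume) hl
  rw [intervalIntegrable_iff_integrableOn_Ioc_of_le hl] at hFint ⊢
  exact hFint.congr_fun hfF.symm measurableSet_Ioc

end PiecewiseCont

theorem Profile.piecewiseCont {f : ℝ → ℝ} (hf : Profile m l f) : PiecewiseCont m l f :=
  ⟨hf.1, f, hf.2, fun _ _ => rfl⟩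

theorem PiecewiseC1.piecewiseCont {f fd : ℝ → ℝ} (hm : 0 ≤ m) (hl : 0 ≤ l)
    (hf : PiecewiseC1 m l f fd) : PiecewiseCont m l f :=
  ⟨⟨f, hf.1.mono (Icc_subset_Icc_right hl), fun _ _ => rfl⟩,
    ⟨f, hf.1.mono (Icc_subset_Icc_left (neg_nonpos.mpr hm)), fun _ _ => rfl⟩⟩

theorem PiecewiseC1.piecewiseCont_deriv {f fd : ℝ → ℝ} (hf : PiecewiseC1 m l f fd) :
    PiecewiseCont m l fd :=
  hf.2.2.2

theorem pwInt_add {f h : ℝ → ℝ} (hm : 0 ≤ m) (hl : 0 ≤ l)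
    (hf : PiecewiseCont m l f) (hh : PiecewiseCont m l h) :
    pwInt m l (fun x => f x + h x) = pwInt m l f + pwInt m l h := by
  unfold pwInt
  rw [integral_add (hf.intervalIntegrable_left hm) (hh.intervalIntegrable_left hm),
    integral_add (hf.intervalIntegrable_right hl) (hh.intervalIntegrable_right hl),
    add_add_add_comm]

theorem pwInt_const_mul (c : ℝ) (f : ℝ → ℝ) :
    pwInt m l (fun x => c * f x) = c * pwInt m l f := by
  simp only [pwInt, intervalIntegral.integral_const_mul, mul_add]

theorem pwInt_nonneg {f : ℝ → ℝ} (hm : 0 ≤ m) (hl : 0 ≤ l)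
    (hf : ∀ x ∈ Icc (-m) l, 0 ≤ f x) : 0 ≤ pwInt m l f := by
  have hm' : -m ≤ 0 := neg_nonpos.mpr hm
  exact add_nonneg
    (integral_nonneg hm' fun x hx => hf x (Icc_subset_Icc_right hl hx))
    (integral_nonneg hl fun x hx => hf x (Icc_subset_Icc_left hm' hx))

/-- What is left of `E + g k J` after its surface-tension and viscous parts are split off: the
compression energy together with the square that completes the gravity term. -/
def energyRemainder (m l g k : ℝ) (ρ0 p φ ψ ψd : ℝ → ℝ) : ℝ :=
  (1 / 2) * pwInt m l (fun x =>
    ρ0 x * (p x * (ψd x + k * φ x) ^ 2 + g * k * (φ x - ψ x) ^ 2))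

variable {g k : ℝ} {ρ0 p ε0 δ0 φ ψ φd ψd : ℝ → ℝ}

theorem energyRemainder_nonneg (hm : 0 ≤ m) (hl : 0 ≤ l) (hgk : 0 ≤ g * k)
    (hρ : ∀ x ∈ Icc (-m) l, 0 ≤ ρ0 x) (hp : ∀ x ∈ Icc (-m) l, 0 ≤ p x) :
    0 ≤ energyRemainder m l g k ρ0 p φ ψ ψd := by
  refine mul_nonneg one_half_pos.le (pwInt_nonneg hm hl fun x hx => ?_)
  have hρx := hρ x hx
  have hpx := hp x hx
  positivity

theorem energyE1_nonneg (hm : 0 ≤ m) (hl : 0 ≤ l)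
    (hε : ∀ x ∈ Icc (-m) l, 0 ≤ ε0 x) (hδ : ∀ x ∈ Icc (-m) l, 0 ≤ δ0 x) :
    0 ≤ energyE1 m l k ε0 δ0 φ ψ φd ψd := by
  refine add_nonneg
    (mul_nonneg one_half_pos.le (pwInt_nonneg hm hl fun x hx => ?_))
    (mul_nonneg one_half_pos.le (pwInt_nonneg hm hl fun x hx => ?_))
  all_goals
    have hεx := hε x hx
    have hδx := hδ x hx
    positivity

theorem energyE_add_mul_energyJ_eq (hm : 0 ≤ m) (hl : 0 ≤ l)
    (hρ : PiecewiseCont m l ρ0) (hp : PiecewiseCont m l p)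
    (hε : PiecewiseCont m l ε0) (hδ : PiecewiseCont m l δ0)
    (hφ : PiecewiseCont m l φ) (hψ : PiecewiseCont m l ψ)
    (hφd : PiecewiseCont m l φd) (hψd : PiecewiseCont m l ψd) (σ s : ℝ) :
    energyE m l g σ k ρ0 p ε0 δ0 φ ψ φd ψd s + g * k * energyJ m l ρ0 φ ψ =
      σ * k ^ 2 / 2 * ψ 0 ^ 2 + s * energyE1 m l k ε0 δ0 φ ψ φd ψd
        + energyRemainder m l g k ρ0 p φ ψ ψd := by
  unfold energyE energyJ energyE1 energyRemainder
  rw [add_assoc, add_assoc, add_assoc, mul_add s]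
  congr 1
  simp (disch := fun_prop) only [← pwInt_const_mul, ← pwInt_add hm hl]
  congr 1
  funext x
  ring

theorem energy_lower_bound_general {σ s : ℝ}
    (hm : 0 ≤ m) (hl : 0 ≤ l) (hgk : 0 ≤ g * k) (hσ : 0 ≤ σ) (hs : 0 ≤ s)
    (hprof : ProfilesHyp m l ρ0 p ε0 δ0)
    (hφ : PiecewiseC1 m l φ φd) (hψ : PiecewiseC1 m l ψ ψd) :
    0 ≤ energyE1 m l k ε0 δ0 φ ψ φd ψd ∧
    -g * k * energyJ m l ρ0 φ ψ + σ * k ^ 2 / 2 * ψ 0 ^ 2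
        + s * energyE1 m l k ε0 δ0 φ ψ φd ψd
      ≤ energyE m l g σ k ρ0 p ε0 δ0 φ ψ φd ψd s ∧
    -g * k * energyJ m l ρ0 φ ψ ≤ energyE m l g σ k ρ0 p ε0 δ0 φ ψ φd ψd s := by
  obtain ⟨hρ, hp, hε, hδ, ρ_pos, p_pos, ε_pos, δ_nonneg⟩ := hprof
  have identity := energyE_add_mul_energyJ_eq (g := g) (k := k) hm hl hρ.piecewiseCont
    hp.piecewiseCont hε.piecewiseCont hδ.piecewiseCont (hφ.piecewiseCont hm hl)
    (hψ.piecewiseCont hm hl) hφ.piecewiseCont_deriv hψ.piecewiseCont_deriv σ s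
  have remainder_nonneg : 0 ≤ energyRemainder m l g k ρ0 p φ ψ ψd :=
    energyRemainder_nonneg hm hl hgk (fun x hx => (ρ_pos x hx).le) fun x hx => (p_pos x hx).le
  have E1_nonneg : 0 ≤ energyE1 m l k ε0 δ0 φ ψ φd ψd :=
    energyE1_nonneg hm hl (fun x hx => (ε_pos x hx).le) δ_nonneg
  have surface_nonneg : 0 ≤ σ * k ^ 2 / 2 * ψ 0 ^ 2 := by positivity
  have viscous_nonneg := mul_nonneg hs E1_nonneg
  exact ⟨E1_nonneg, by linarith, by linarith⟩

end

/-- Lower bound for the energy: `E(φ,ψ;s) ≥ -g k + (σ k²/2) ψ(0)² + s E1(φ,ψ)`,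
`E1(φ,ψ) ≥ 0`, and in particular `E(φ,ψ;s) ≥ -g k` on the normalized admissible set. -/
theorem energy_lower_bound (m l g σ k s : ℝ) (ρ0 p ε0 δ0 φ ψ φd ψd : ℝ → ℝ)
    (hm : 0 < m) (hl : 0 < l) (hg : 0 < g) (hσ : 0 ≤ σ) (hk : 0 < k) (hs : 0 < s)
    (hprof : ProfilesHyp m l ρ0 p ε0 δ0)
    (hadm : Admissible m l φ ψ φd ψd)
    (hJ : energyJ m l ρ0 φ ψ = 1) :
    0 ≤ energyE1 m l k ε0 δ0 φ ψ φd ψd ∧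
    -g * k + σ * k ^ 2 / 2 * (ψ 0) ^ 2 + s * energyE1 m l k ε0 δ0 φ ψ φd ψd
      ≤ energyE m l g σ k ρ0 p ε0 δ0 φ ψ φd ψd s ∧
    -g * k ≤ energyE m l g σ k ρ0 p ε0 δ0 φ ψ φd ψd s := by
  simpa only [hJ, mul_one] using energy_lower_bound_general hm.le hl.le
    (mul_pos hg hk).le hσ hs.le hprof hadm.1 hadm.2.1

end RT
end
end

section
/- For every function ψ : ℝ → ℝ that is continuous on [-m,ℓ], continuously differentiable on [-m,0] and on [0,ℓ] (with piecewise derivative ψ'), and satisfies ψ(-m) = ψ(ℓ) = 0, one has the integration-by-parts identity ∫_{-m}^ℓ g ρ0 ψ ψ' = −(g/2)(ρ0⁺ − ρ0⁻) ψ(0)² + (g²/2) ∫_{-m}^ℓ (ρ0/p) ψ². -/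
open Set MeasureTheory intervalIntegral Filter Topology

noncomputable section

/-!
Both pieces come from `w ψ ψ' = w (ψ² / 2)'` and integration by parts, the weight `w = ρ` satisfying
`w' = -g ρ / p`. Since `p` may tend to `0` at the interface from the left, `ρ / p` may be unbounded;
it is integrable where it is needed because `ρ'` has constant sign and `ρ` has limits at both ends.
-/

namespace RT

section Interval

variable {a b : ℝ}

theorem exists_continuousOn_Icc_of_hasDerivAt_of_tendsto {E : Type*} [NormedAddCommGroup E]
    [NormedSpace ℝ E] {w w' : ℝ → E} {wa wb : E} (hab : a < b)
    (hww' : ∀ x ∈ Ioo a b, HasDerivAt w (w' x) x)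
    (ha : Tendsto w (𝓝[>] a) (𝓝 wa)) (hb : Tendsto w (𝓝[<] b) (𝓝 wb)) :
    ∃ W : ℝ → E, ContinuousOn W (Icc a b) ∧ EqOn W w (Ioo a b) ∧
      (∀ x ∈ Ioo a b, HasDerivAt W (w' x) x) ∧ W a = wa ∧ W b = wb := by
  have hw : ContinuousOn w (Ioo a b) := fun x hx => (hww' x hx).continuousAt.continuousWithinAt
  have hEq : EqOn (extendFrom (Ioo a b) w) w (Ioo a b) := fun x hx =>
    extendFrom_eq (subset_closure hx) (hw x hx)
  have hderiv : ∀ x ∈ Ioo a b, HasDerivAt (extendFrom (Ioo a b) w) (w' x) x := fun x hx =>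
    (hww' x hx).congr_of_eventuallyEq (hEq.eventuallyEq_of_mem (isOpen_Ioo.mem_nhds hx))
  exact ⟨extendFrom (Ioo a b) w, continuousOn_Icc_extendFrom_Ioo hw ha hb, hEq, hderiv,
    eq_lim_at_left_extendFrom_Ioo hab ha, eq_lim_at_right_extendFrom_Ioo hab hb⟩

theorem intervalIntegrable_const_mul_of_hasDerivAt_of_nonneg {w h : ℝ → ℝ} {c : ℝ}
    (hw : ContinuousOn w (uIcc a b))
    (hderiv : ∀ x ∈ Ioo (min a b) (max a b), HasDerivAt w (c * h x) x)
    (hh : ∀ x ∈ Ioo (min a b) (max a b), 0 ≤ h x) :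
    IntervalIntegrable (fun x => c * h x) volume a b := by
  rcases le_total 0 c with hc | hc
  · exact intervalIntegrable_deriv_of_nonneg hw hderiv fun x hx => mul_nonneg hc (hh x hx)
  · have hneg : IntervalIntegrable (fun x => -(c * h x)) volume a b :=
      intervalIntegrable_deriv_of_nonneg hw.neg (fun x hx => (hderiv x hx).neg) fun x hx =>
        neg_nonneg.2 (mul_nonpos_of_nonpos_of_nonneg hc (hh x hx))
    simpa only [Pi.neg_def, neg_neg] using hneg.neg

theorem integral_mul_mul_deriv_self {w w' f f' : ℝ → ℝ}
    (hw : ContinuousOn w (uIcc a b)) (hf : ContinuousOn f (uIcc a b))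
    (hww' : ∀ x ∈ Ioo (min a b) (max a b), HasDerivAt w (w' x) x)
    (hff' : ∀ x ∈ Ioo (min a b) (max a b), HasDerivAt f (f' x) x)
    (hw' : IntervalIntegrable w' volume a b) (hf' : IntervalIntegrable f' volume a b) :
    ∫ x in a..b, w x * (f x * f' x) =
      (w b * f b ^ 2 - w a * f a ^ 2) / 2 - (∫ x in a..b, w' x * f x ^ 2) / 2 := by
  have hsq : ∀ x ∈ Ioo (min a b) (max a b), HasDerivAt (fun y => f y ^ 2 / 2) (f x * f' x) x :=
    fun x hx => (((hff' x hx).fun_pow 2).div_const 2).congr_deriv (by push_cast; ring)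
  have hparts := integral_mul_deriv_eq_deriv_mul_of_hasDerivAt hw ((hf.pow 2).div_const 2)
    hww' hsq hw' (hf'.continuousOn_mul hf)
  simp only [Pi.pow_apply, ← mul_div_assoc, intervalIntegral.integral_div] at hparts
  rw [hparts]
  ring

theorem integral_mul_mul_deriv_of_hydrostatic {g ρa ρb : ℝ} {ρ p ψ ψd : ℝ → ℝ} (hab : a < b)
    (hρ : ∀ x ∈ Ioo a b, 0 ≤ ρ x) (hp : ∀ x ∈ Ioo a b, 0 < p x)
    (hρ' : ∀ x ∈ Ioo a b, HasDerivAt ρ (-g * ρ x / p x) x)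
    (ha : Tendsto ρ (𝓝[>] a) (𝓝 ρa)) (hb : Tendsto ρ (𝓝[<] b) (𝓝 ρb))
    (hψ : ContinuousOn ψ (Icc a b)) (hψ' : ∀ x ∈ Ioo a b, HasDerivAt ψ (ψd x) x)
    (hψd : IntervalIntegrable ψd volume a b) :
    ∫ x in a..b, g * ρ x * ψ x * ψd x =
      g / 2 * (ρb * ψ b ^ 2 - ρa * ψ a ^ 2) +
        g ^ 2 / 2 * ∫ x in a..b, ρ x / p x * ψ x ^ 2 := by
  simp only [mul_div_assoc] at hρ'
  obtain ⟨R, hR, hRρ, hR', rfl, rfl⟩ :=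
    exists_continuousOn_Icc_of_hasDerivAt_of_tendsto hab hρ' ha hb
  have hcongr : ∫ x in a..b, g * ρ x * ψ x * ψd x = g * ∫ x in a..b, R x * (ψ x * ψd x) := by
    rw [← intervalIntegral.integral_const_mul]
    refine integral_congr_Ioo_of_le hab.le fun x hx => ?_
    simp only [hRρ hx, mul_assoc]
  rw [← uIcc_of_le hab.le] at hR hψ
  rw [← uIoo_of_le hab.le] at hρ hp hR' hψ'
  have hRd : IntervalIntegrable (fun x => -g * (ρ x / p x)) volume a b :=
    intervalIntegrable_const_mul_of_hasDerivAt_of_nonneg hR hR' fun x hx =>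
      div_nonneg (hρ x hx) (hp x hx).le
  rw [hcongr, integral_mul_mul_deriv_self hR hψ hR' hψ' hRd hψd]
  simp only [mul_assoc, intervalIntegral.integral_const_mul]
  ring

end Interval

section Pieces

variable {m l g : ℝ}

theorem PiecewiseCont.intervalIntegrable_left_s2 {f : ℝ → ℝ} (hf : PiecewiseCont m l f) (hm : 0 ≤ m) :
    IntervalIntegrable f volume (-m) 0 := by
  obtain ⟨⟨F, hF, hfF⟩, -⟩ := hf
  have hm' : -m ≤ 0 := neg_nonpos.2 hm
  refine (hF.intervalIntegrable_of_Icc hm').congr_uIoo ?_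
  rw [uIoo_of_le hm']
  exact (hfF.mono Ioo_subset_Ico_self).symm

theorem PiecewiseCont.intervalIntegrable_right_s2 {f : ℝ → ℝ} (hf : PiecewiseCont m l f)
    (hl : 0 ≤ l) : IntervalIntegrable f volume 0 l := by
  obtain ⟨-, F, hF, hfF⟩ := hf
  refine (hF.intervalIntegrable_of_Icc hl).congr_uIoo ?_
  rw [uIoo_of_le hl]
  exact (hfF.mono Ioo_subset_Ioc_self).symm

variable {ρ p : ℝ → ℝ}

theorem Hydrostatic.tendsto_bottom (h : Hydrostatic m l g ρ p) (hm : 0 < m) :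
    Tendsto ρ (𝓝[>] (-m)) (𝓝 (ρ (-m))) := by
  have hm' : -m < 0 := neg_lt_zero.2 hm
  rw [← nhdsWithin_Ioo_eq_nhdsGT hm']
  exact (h.1 (-m) (left_mem_Ico.2 hm')).continuousWithinAt.mono Ioo_subset_Ico_self

theorem Hydrostatic.tendsto_top (h : Hydrostatic m l g ρ p) (hl : 0 < l) :
    Tendsto ρ (𝓝[<] l) (𝓝 (ρ l)) := by
  rw [← nhdsWithin_Ioo_eq_nhdsLT hl]
  exact (h.2 l (right_mem_Ioc.2 hl)).continuousWithinAt.mono Ioo_subset_Ioc_self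

theorem Profile.tendsto_nhdsGT_zero {f : ℝ → ℝ} (hf : Profile m l f) (hl : 0 < l) :
    Tendsto f (𝓝[>] 0) (𝓝 (f 0)) := by
  rw [← nhdsWithin_Ioo_eq_nhdsGT hl]
  exact (hf.2 0 (left_mem_Icc.2 hl.le)).mono Ioo_subset_Icc_self

theorem steady_state_integration_by_parts_general {ψ ψd : ℝ → ℝ} {ρminus ρplus : ℝ}
    (hm : 0 < m) (hl : 0 < l)
    (hρ : ∀ x ∈ Ioo (-m) l, 0 ≤ ρ x) (hp : ∀ x ∈ Ioo (-m) l, 0 < p x)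
    (hhydro : Hydrostatic m l g ρ p)
    (hρm : Tendsto ρ (𝓝[<] 0) (𝓝 ρminus)) (hρp : Tendsto ρ (𝓝[>] 0) (𝓝 ρplus))
    (hψ : PiecewiseC1 m l ψ ψd) :
    pwInt m l (fun x => g * ρ x * ψ x * ψd x) =
      g / 2 * (ρ l * ψ l ^ 2 - ρ (-m) * ψ (-m) ^ 2) - g / 2 * (ρplus - ρminus) * ψ 0 ^ 2 +
        g ^ 2 / 2 * pwInt m l (fun x => ρ x / p x * ψ x ^ 2) := by
  obtain ⟨hψc, hψl, hψr, hψd⟩ := hψ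
  have hm' : -m < 0 := neg_lt_zero.2 hm
  have hsubl : Ioo (-m) 0 ⊆ Ioo (-m) l := Ioo_subset_Ioo_right hl.le
  have hsubr : Ioo 0 l ⊆ Ioo (-m) l := Ioo_subset_Ioo_left hm'.le
  have hleft := integral_mul_mul_deriv_of_hydrostatic hm'
    (fun x hx => hρ x (hsubl hx)) (fun x hx => hp x (hsubl hx))
    (fun x hx => (hhydro.1 x (Ioo_subset_Ico_self hx)).hasDerivAt (Ico_mem_nhds hx.1 hx.2))
    (hhydro.tendsto_bottom hm) hρm (hψc.mono (Icc_subset_Icc_right hl.le))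
    (fun x hx => (hψl x (Ioo_subset_Ico_self hx)).hasDerivAt (Icc_mem_nhds hx.1 hx.2))
    (hψd.intervalIntegrable_left_s2 hm.le)
  have hright := integral_mul_mul_deriv_of_hydrostatic hl
    (fun x hx => hρ x (hsubr hx)) (fun x hx => hp x (hsubr hx))
    (fun x hx => (hhydro.2 x (Ioo_subset_Ioc_self hx)).hasDerivAt (Ioc_mem_nhds hx.1 hx.2))
    hρp (hhydro.tendsto_top hl) (hψc.mono (Icc_subset_Icc_left hm'.le))
    (fun x hx => (hψr x (Ioo_subset_Ioc_self hx)).hasDerivAt (Icc_mem_nhds hx.1 hx.2))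
    (hψd.intervalIntegrable_right_s2 hl.le)
  rw [pwInt, pwInt, hleft, hright]
  ring

end Pieces

/-- The integration-by-parts identity
`∫ g ρ0 ψ ψ' = -(g/2)(ρ0⁺ - ρ0⁻) ψ(0)² + (g²/2) ∫ (ρ0/p) ψ²` under the hydrostatic
steady-state relation, where `ρ0⁺ = ρ0 0` and `ρ0⁻` is the left limit of `ρ0` at `0`. -/
theorem steady_state_integration_by_parts (m l g σ k : ℝ) (ρ0 p ε0 δ0 ψ ψd : ℝ → ℝ)
    (ρ0minus : ℝ)
    (hm : 0 < m) (hl : 0 < l) (hg : 0 < g) (hσ : 0 ≤ σ) (hk : 0 < k)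
    (hprof : ProfilesHyp m l ρ0 p ε0 δ0)
    (hhydro : Hydrostatic m l g ρ0 p)
    (hρm : Tendsto ρ0 (𝓝[<] 0) (𝓝 ρ0minus))
    (hψ : PiecewiseC1 m l ψ ψd) (hbc1 : ψ (-m) = 0) (hbc2 : ψ l = 0) :
    pwInt m l (fun x => g * ρ0 x * ψ x * ψd x)
      = -(g / 2) * (ρ0 0 - ρ0minus) * (ψ 0) ^ 2
        + g ^ 2 / 2 * pwInt m l (fun x => ρ0 x / p x * (ψ x) ^ 2) := by
  obtain ⟨hρ0, -, -, -, hρpos, hppos, -, -⟩ := hprof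
  rw [steady_state_integration_by_parts_general hm hl
    (fun x hx => (hρpos x (Ioo_subset_Icc_self hx)).le)
    (fun x hx => hppos x (Ioo_subset_Icc_self hx)) hhydro hρm (hρ0.tendsto_nhdsGT_zero hl) hψ,
    hbc1, hbc2]
  ring

end RT
end
end
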